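/- Let n and t be positive integers and let p ∈ [0,1]. Then P(α̃(G(n,p)) > 2t) ≤ P(G(n,p) has a (t,t)-bipartite-hole) ≤ C(n,t)²(1−p)^{t²}, where C(n,t) denotes a binomial coefficient. -/

import Mathlib

def SimpleGraph.HasBipartiteHole {V : Type*} (G : SimpleGraph V) (s t : ℕ) : Prop :=
  ∃ S T : Finset V, Disjoint S T ∧ S.card = s ∧ T.card = t ∧
    ∀ a ∈ S, ∀ b ∈ T, ¬ G.Adj a b

noncomputable def SimpleGraph.biHoleNumber {V : Type*} (G : SimpleGraph V) : ℕ :=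
  sInf {r : ℕ | ∃ s t : ℕ, 0 < s ∧ 0 < t ∧ r = s + t - 1 ∧ ¬ G.HasBipartiteHole s t}

open Classical in
/-- The Erdős–Rényi probability that a graph drawn from `G(n, p)` satisfies property `A`. -/
noncomputable def erProb (n : ℕ) (p : ℝ) (A : SimpleGraph (Fin n) → Prop) : ℝ :=
  ∑ G : SimpleGraph (Fin n),
    if A G then p ^ G.edgeSet.ncard * (1 - p) ^ (n.choose 2 - G.edgeSet.ncard) else 0

/-- A graph without a `(t, t)`-bipartite-hole has bipartite-hole-number at most `2 * t - 1`. -/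
theorem SimpleGraph.hasBipartiteHole_of_two_mul_lt_biHoleNumber {V : Type*} {G : SimpleGraph V}
    {t : ℕ} (ht : 1 ≤ t) (h : 2 * t < G.biHoleNumber) : G.HasBipartiteHole t t := by
  by_contra hG
  have hle : G.biHoleNumber ≤ t + t - 1 := Nat.sInf_le ⟨t, t, ht, ht, rfl, hG⟩
  omega

section ErdosRenyi

variable {n : ℕ} {p : ℝ}

theorem erProb_mono (hp0 : 0 ≤ p) (hp1 : p ≤ 1) {A B : SimpleGraph (Fin n) → Prop}
    (h : ∀ G, A G → B G) : erProb n p A ≤ erProb n p B := by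
  have hq : 0 ≤ 1 - p := sub_nonneg.2 hp1
  refine Finset.sum_le_sum fun G _ => ?_
  by_cases hA : A G
  · rw [if_pos hA, if_pos (h G hA)]
  · rw [if_neg hA]
    split_ifs <;> positivity

/-- The union bound. -/
theorem erProb_exists_le_sum (hp0 : 0 ≤ p) (hp1 : p ≤ 1) {ι : Type*} (I : Finset ι)
    (A : ι → SimpleGraph (Fin n) → Prop) :
    erProb n p (fun G => ∃ i ∈ I, A i G) ≤ ∑ i ∈ I, erProb n p (A i) := by
  classical
  have hq : 0 ≤ 1 - p := sub_nonneg.2 hp1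
  unfold erProb
  rw [Finset.sum_comm]
  refine Finset.sum_le_sum fun G _ => ?_
  have hnonneg : ∀ i ∈ I, 0 ≤ if A i G then
      p ^ G.edgeSet.ncard * (1 - p) ^ (n.choose 2 - G.edgeSet.ncard) else 0 := by
    intro i _
    split_ifs <;> positivity
  split_ifs with h
  · obtain ⟨i, hi, hA⟩ := h
    refine le_trans ?_ (Finset.single_le_sum hnonneg hi)
    rw [if_pos hA]
  · exact Finset.sum_nonneg hnonneg

/-- The probability that all pairs in a set `F` of possible edges are non-edges is at most
`(1 - p) ^ #F`. -/
theorem erProb_disjoint_edgeSet_le (hp0 : 0 ≤ p) (hp1 : p ≤ 1) (F : Finset (Sym2 (Fin n)))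
    (hF : ∀ e ∈ F, ¬ e.IsDiag) :
    erProb n p (fun G => ∀ e ∈ F, e ∉ G.edgeSet) ≤ (1 - p) ^ F.card := by
  classical
  have hq : 0 ≤ 1 - p := sub_nonneg.2 hp1
  obtain ⟨U, hU⟩ : ∃ U : Finset (Sym2 (Fin n)), U = (⊤ : SimpleGraph (Fin n)).edgeFinset :=
    ⟨_, rfl⟩
  have hUcard : U.card = n.choose 2 := by
    rw [hU, SimpleGraph.card_edgeFinset_top_eq_card_choose_two, Fintype.card_fin]
  have hFU : F ⊆ U := fun e he => by simpa [hU] using hF e he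
  have hcard : (U \ F).card + F.card = n.choose 2 := by
    rw [← hUcard, Finset.card_sdiff_add_card_eq_card hFU]
  have hinj : Function.Injective fun G : SimpleGraph (Fin n) => G.edgeFinset :=
    fun G H h => SimpleGraph.edgeFinset_inj.1 h
  calc erProb n p (fun G => ∀ e ∈ F, e ∉ G.edgeSet)
      = ∑ G : SimpleGraph (Fin n) with ∀ e ∈ F, e ∉ G.edgeSet,
          p ^ G.edgeFinset.card * (1 - p) ^ (n.choose 2 - G.edgeFinset.card) := by
        rw [erProb, Finset.sum_filter]
        refine Finset.sum_congr rfl fun G _ => ?_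
        have hcoe : G.edgeSet.ncard = G.edgeFinset.card := by
          rw [← SimpleGraph.coe_edgeFinset G, Set.ncard_coe_finset]
        rw [hcoe]
        split_ifs <;> rfl
    _ = ∑ s ∈ Finset.image (fun G : SimpleGraph (Fin n) => G.edgeFinset)
            {G | ∀ e ∈ F, e ∉ G.edgeSet},
          p ^ s.card * (1 - p) ^ (n.choose 2 - s.card) := by
        rw [Finset.sum_image hinj.injOn]
    _ ≤ ∑ s ∈ (U \ F).powerset, p ^ s.card * (1 - p) ^ (n.choose 2 - s.card) := by
        refine Finset.sum_le_sum_of_subset_of_nonneg ?_ fun _ _ _ => by positivity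
        intro s hs
        obtain ⟨G, hG, rfl⟩ := Finset.mem_image.1 hs
        rw [Finset.mem_powerset]
        intro e he
        have he' : e ∈ G.edgeSet := SimpleGraph.mem_edgeFinset.1 he
        exact Finset.mem_sdiff.2 ⟨hU ▸ SimpleGraph.edgeFinset_mono le_top he,
          fun heF => (Finset.mem_filter.1 hG).2 e heF he'⟩
    _ = ∑ s ∈ (U \ F).powerset,
          p ^ s.card * (1 - p) ^ ((U \ F).card - s.card) * (1 - p) ^ F.card := by
        refine Finset.sum_congr rfl fun s hs => ?_
        have hle := Finset.card_le_card (Finset.mem_powerset.1 hs)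
        rw [mul_assoc, ← pow_add]
        congr 2
        omega
    _ = (1 - p) ^ F.card := by
        rw [← Finset.sum_mul, Finset.sum_pow_mul_eq_add_pow, add_sub_cancel, one_pow, one_mul]

/-- The probability that two fixed disjoint sets form a bipartite hole. -/
theorem erProb_no_edge_between_le (hp0 : 0 ≤ p) (hp1 : p ≤ 1) {S T : Finset (Fin n)}
    (hST : Disjoint S T) :
    erProb n p (fun G => ∀ a ∈ S, ∀ b ∈ T, ¬ G.Adj a b) ≤ (1 - p) ^ (S.card * T.card) := by
  classical
  have hinj : Set.InjOn (fun x : Fin n × Fin n => s(x.1, x.2))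
      ((S ×ˢ T : Finset (Fin n × Fin n)) : Set (Fin n × Fin n)) := by
    rintro ⟨a, b⟩ hab ⟨c, d⟩ hcd h
    rw [Finset.mem_coe, Finset.mem_product] at hab hcd
    rcases Sym2.eq_iff.1 h with ⟨h₁, h₂⟩ | ⟨h₁, -⟩
    · exact Prod.ext h₁ h₂
    · exact absurd h₁ (Finset.disjoint_left.1 hST hab.1 <| · ▸ hcd.2)
  rw [← Finset.card_product, ← Finset.card_image_of_injOn hinj]
  refine le_trans (erProb_mono hp0 hp1 ?_) (erProb_disjoint_edgeSet_le hp0 hp1 _ ?_)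
  · intro G hG e he
    obtain ⟨⟨a, b⟩, hab, rfl⟩ := Finset.mem_image.1 he
    rw [Finset.mem_product] at hab
    exact hG a hab.1 b hab.2
  · intro e he
    obtain ⟨⟨a, b⟩, hab, rfl⟩ := Finset.mem_image.1 he
    rw [Finset.mem_product] at hab
    rw [Sym2.mk_isDiag_iff]
    exact fun h => Finset.disjoint_left.1 hST hab.1 (h ▸ hab.2)

theorem erProb_hasBipartiteHole_le (hp0 : 0 ≤ p) (hp1 : p ≤ 1) (s t : ℕ) :
    erProb n p (fun G => G.HasBipartiteHole s t) ≤
      (n.choose s : ℝ) * n.choose t * (1 - p) ^ (s * t) := by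
  classical
  have hq : 0 ≤ 1 - p := sub_nonneg.2 hp1
  set P : Finset (Finset (Fin n) × Finset (Fin n)) :=
    Finset.powersetCard s Finset.univ ×ˢ Finset.powersetCard t Finset.univ with hP
  have hPcard : P.card = n.choose s * n.choose t := by
    simp [hP]
  calc erProb n p (fun G => G.HasBipartiteHole s t)
      ≤ erProb n p (fun G => ∃ x ∈ P.filter (fun x => Disjoint x.1 x.2),
          ∀ a ∈ x.1, ∀ b ∈ x.2, ¬ G.Adj a b) := by
        refine erProb_mono hp0 hp1 fun G => ?_
        rintro ⟨S, T, hST, hS, hT, h⟩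
        exact ⟨(S, T), by simp [hP, hST, hS, hT], h⟩
    _ ≤ ∑ x ∈ P.filter (fun x => Disjoint x.1 x.2),
          erProb n p (fun G => ∀ a ∈ x.1, ∀ b ∈ x.2, ¬ G.Adj a b) :=
        erProb_exists_le_sum hp0 hp1 _ _
    _ ≤ ∑ x ∈ P.filter (fun x => Disjoint x.1 x.2), (1 - p) ^ (s * t) := by
        refine Finset.sum_le_sum fun x hx => ?_
        obtain ⟨hx, hdisj⟩ := Finset.mem_filter.1 hx
        obtain ⟨hS, hT⟩ := Finset.mem_product.1 hx
        rw [← (Finset.mem_powersetCard.1 hS).2, ← (Finset.mem_powersetCard.1 hT).2]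
        exact erProb_no_edge_between_le hp0 hp1 hdisj
    _ ≤ ∑ x ∈ P, (1 - p) ^ (s * t) :=
        Finset.sum_le_sum_of_subset_of_nonneg (Finset.filter_subset _ _)
          fun _ _ _ => by positivity
    _ = (n.choose s : ℝ) * n.choose t * (1 - p) ^ (s * t) := by
        rw [Finset.sum_const, hPcard, nsmul_eq_mul, Nat.cast_mul]

end ErdosRenyi

theorem prob_biHoleNumber_gt_le (n t : ℕ) (hn : 1 ≤ n) (ht : 1 ≤ t)
    (p : ℝ) (hp0 : 0 ≤ p) (hp1 : p ≤ 1) :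
    erProb n p (fun G => 2 * t < G.biHoleNumber) ≤
        erProb n p (fun G => G.HasBipartiteHole t t) ∧
      erProb n p (fun G => G.HasBipartiteHole t t) ≤
        (n.choose t : ℝ) ^ 2 * (1 - p) ^ (t ^ 2) := by
  refine ⟨erProb_mono hp0 hp1 fun G =>
    SimpleGraph.hasBipartiteHole_of_two_mul_lt_biHoleNumber ht, ?_⟩
  simpa only [sq] using erProb_hasBipartiteHole_le hp0 hp1 t t
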